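/- Let A be an n × n complex Hermitian matrix whose eigenvalues λ_1, …, λ_n all lie in [−1, 1], with spectral decomposition A = U·diag(λ_1, …, λ_n)·U* (U unitary). Then for every real m > 0 and all integers k ≥ 1 and 1 ≤ k' ≤ k, ‖P − ρ(A)‖₂ ≤ d^m_{k',k}·J*/(π (k'+1)) + m·C_m·J*/(k+1) + m·π²/(3 (k+1)²), where J* = max_{1 ≤ j ≤ n} J(arccos λ_j). -/

import Mathlib

open Real MeasureTheory Matrix Polynomial

/-- The step function on ℝ: `1` on `(a, b)`, `1/2` at `a` and `b`, `0` otherwise. -/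
noncomputable def stepS (a b x : ℝ) : ℝ :=
  if x = a ∨ x = b then 1 / 2 else if x ∈ Set.Ioo a b then 1 else 0

/-- Fourier coefficients of the step function (with `α = arccos a`, `β = arccos b`). -/
noncomputable def fourierC (α β : ℝ) : ℕ → ℝ
  | 0 => (α - β) / Real.pi
  | (j + 1) => (2 / Real.pi) * (Real.sin ((j + 1) * α) - Real.sin ((j + 1) * β)) / (j + 1)

/-- Exponent-`m` Lanczos damping factors `d^m_{j,k}`, with `d^m_{0,k} = 1`. -/
noncomputable def dampL (m : ℝ) (k j : ℕ) : ℝ :=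
  if j = 0 then 1
  else (Real.sin (j * Real.pi / (k + 1)) / (j * Real.pi / (k + 1))) ^ m

/-- The constant `C_m = ∫_0^π (sin u)^{m-1}(sin u - u cos u)/u^{m+2} du`. -/
noncomputable def lanczosCm (m : ℝ) : ℝ :=
  ∫ u in Set.Ioo (0 : ℝ) Real.pi,
    Real.sin u ^ (m - 1) * (Real.sin u - u * Real.cos u) / u ^ (m + 2)

/-- The quantity `J(θ)` controlling the pointwise Fourier error. -/
noncomputable def Jfun (α β θ : ℝ) : ℝ :=
  if θ = α then
    1 / |Real.sin α| + 1 / |Real.sin ((α + β) / 2)| + 1 / |Real.sin ((α - β) / 2)|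
  else if θ = β then
    1 / |Real.sin β| + 1 / |Real.sin ((α + β) / 2)| + 1 / |Real.sin ((α - β) / 2)|
  else
    1 / |Real.sin ((θ + α) / 2)| + 1 / |Real.sin ((θ - α) / 2)|
      + 1 / |Real.sin ((θ + β) / 2)| + 1 / |Real.sin ((θ - β) / 2)|

/-- The damped Chebyshev filter applied to a matrix:
`ρ(A) = ∑_{j=0}^{k'} c_j d^m_{j,k} T_j(A)`. -/
noncomputable def chebFilter (a b m : ℝ) (k k' : ℕ) {n : ℕ}
    (A : Matrix (Fin n) (Fin n) ℂ) : Matrix (Fin n) (Fin n) ℂ :=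
  ∑ j ∈ Finset.range (k' + 1),
    ((fourierC (Real.arccos a) (Real.arccos b) j * dampL m k j : ℝ) : ℂ)
      • (Polynomial.aeval A (Polynomial.Chebyshev.T ℂ (j : ℤ)))

/-!
In the angle `θ = arccos x` the step function is, up to the constant `(α - β) / π`, a combination of
four translates of the sawtooth `∑ sin (j x) / j = -arg (1 - exp (i x))`, and so are its partial
Fourier sums. With `z = exp (i x)`, summation by parts gives
`‖1 - z‖ * ‖∑ j > N, z ^ j / j‖ ≤ 2 / (N + 1)`, and `‖1 - z‖ = 2 |sin (x / 2)|`. Adding the four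
translates, the undamped partial sums have error at most `J(θ) / (π (N + 1))`.

A second summation by parts writes the error of the damped sum as a combination of these undamped
errors with the nonnegative weights `d_j - d_{j+1}` and `d_{k'}`. The factors `d_j` are samples of
`sinc ^ m`, whose derivative at `u` is `-m u` times the integrand of `C_m`. On the `j`-th cell
`u ≤ (j + 1) π / (k + 1)`, which cancels the denominator `j + 1`, so the differences contribute at
most `m C_m J(θ) / (k + 1)` in total. Finally, `P` and `ρ(A)` are diagonal in the same orthonormal
basis, so the spectral norm of their difference is the largest scalar error on the spectrum.
-/

section SummationByParts

lemma smul_sub_sum_smul_by_parts {R M : Type*} [Ring R] [AddCommGroup M] [Module R M]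
    (d : ℕ → R) (e : ℕ → M) (s : M) (K : ℕ) :
    d 0 • s - ∑ j ∈ Finset.range (K + 1), d j • e j =
      ∑ j ∈ Finset.range K, (d j - d (j + 1)) • (s - ∑ i ∈ Finset.range (j + 1), e i)
        + d K • (s - ∑ i ∈ Finset.range (K + 1), e i) := by
  have htelescope : d 0 • s = ∑ j ∈ Finset.range K, (d j - d (j + 1)) • s + d K • s := by
    rw [← Finset.sum_smul, Finset.sum_range_sub', ← add_smul, sub_add_cancel]
  rw [htelescope, Finset.sum_range_by_parts d, Nat.add_sub_cancel]
  simp only [smul_sub, Finset.sum_sub_distrib, ← neg_sub (d (_ + 1)), neg_smul,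
    Finset.sum_neg_distrib]
  abel

lemma norm_smul_sub_sum_smul_le {E : Type*} [SeminormedAddCommGroup E] [NormedSpace ℝ E]
    {d B : ℕ → ℝ} {e : ℕ → E} {s : E} {K : ℕ} (hd : ∀ j < K, d (j + 1) ≤ d j) (hK : 0 ≤ d K)
    (hB : ∀ j ≤ K, ‖s - ∑ i ∈ Finset.range (j + 1), e i‖ ≤ B j) :
    ‖d 0 • s - ∑ j ∈ Finset.range (K + 1), d j • e j‖ ≤
      ∑ j ∈ Finset.range K, (d j - d (j + 1)) * B j + d K * B K := by
  have norm_smul_le_mul {c : ℝ} (hc : 0 ≤ c) {j : ℕ} (hj : j ≤ K) :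
      ‖c • (s - ∑ i ∈ Finset.range (j + 1), e i)‖ ≤ c * B j := by
    rw [norm_smul, Real.norm_of_nonneg hc]
    exact mul_le_mul_of_nonneg_left (hB j hj) hc
  rw [smul_sub_sum_smul_by_parts]
  refine (norm_add_le _ _).trans (add_le_add (norm_sum_le_of_le _ fun j hj => ?_)
    (norm_smul_le_mul hK le_rfl))
  have hjK : j < K := Finset.mem_range.1 hj
  exact norm_smul_le_mul (sub_nonneg.2 (hd j hjK)) hjK.le

/-- Summation by parts against the geometric sums `(1 - z) * ∑ i < j, z ^ i = 1 - z ^ j`. -/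
lemma norm_one_sub_mul_sum_smul_pow_le {R : Type*} [NormedRing R] [NormOneClass R]
    [NormedAlgebra ℝ R] {z : R} (hz : ‖z‖ ≤ 1) {d : ℕ → ℝ} (hd : Antitone d)
    (hd0 : ∀ i, 0 ≤ d i) (K : ℕ) :
    ‖(1 - z) * ∑ i ∈ Finset.range K, d i • z ^ i‖ ≤ 2 * d 0 := by
  rcases K with _ | K
  · simpa using hd0 0
  have hgeom : ∀ j ≤ K, ‖1 - ∑ i ∈ Finset.range (j + 1), (1 - z) * z ^ i‖ ≤ (1 : ℝ) := by
    intro j _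
    rw [← Finset.mul_sum, mul_neg_geom_sum, sub_sub_cancel]
    exact (norm_pow_le _ _).trans (pow_le_one₀ (norm_nonneg z) hz)
  have hparts := norm_smul_sub_sum_smul_le (fun j _ => hd j.le_succ) (hd0 K) hgeom
  simp only [mul_one, Finset.sum_range_sub', sub_add_cancel] at hparts
  have hd0_norm : ‖d 0 • (1 : R)‖ = d 0 := by
    rw [norm_smul, norm_one, mul_one, Real.norm_of_nonneg (hd0 0)]
  simp only [Finset.mul_sum, mul_smul_comm]
  calc _ ≤ ‖d 0 • (1 : R)‖ + _ := norm_le_norm_add_norm_sub' _ _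
    _ ≤ 2 * d 0 := by rw [hd0_norm, norm_sub_rev]; linarith

end SummationByParts

section LogTail

open Complex in
lemma norm_one_sub_mul_log_tail_le_of_norm_lt_one {z : ℂ} (hz : ‖z‖ < 1) (N : ℕ) :
    ‖(1 - z) * (-log (1 - z) - ∑ i ∈ Finset.range N, z ^ (i + 1) / (i + 1))‖ ≤ 2 / (N + 1) := by
  have htail := ((hasSum_nat_add_iff' N).2 (hasSum_taylorSeries_neg_log' hz)).mul_left (1 - z)
  refine le_of_tendsto' htail.tendsto_sum_nat.norm fun p => ?_
  have hfactor : ∑ i ∈ Finset.range p, (1 - z) * (z ^ (i + N + 1) / ((i + N : ℕ) + 1)) =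
      z ^ (N + 1) * ((1 - z) * ∑ i ∈ Finset.range p, (1 / (N + i + 1) : ℝ) • z ^ i) := by
    simp only [Finset.mul_sum, real_smul]
    refine Finset.sum_congr rfl fun i _ => ?_
    push_cast
    ring
  have hanti : Antitone fun i : ℕ => (1 / (N + i + 1) : ℝ) := fun i j hij => by
    dsimp only
    gcongr
  have hgeom := norm_one_sub_mul_sum_smul_pow_le hz.le hanti (fun i => by positivity) p
  rw [hfactor, norm_mul, norm_pow]
  calc ‖z‖ ^ (N + 1) * _ ≤ 1 * _ := by
        gcongr
        exact pow_le_one₀ (norm_nonneg z) hz.le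
    _ ≤ 2 / (N + 1) := by simpa [div_eq_mul_inv] using hgeom

open Complex in
lemma one_sub_mem_slitPlane_of_norm_le_one {z : ℂ} (hz : ‖z‖ ≤ 1) (hz1 : z ≠ 1) :
    1 - z ∈ slitPlane := by
  refine Or.inl ?_
  have hre : z.re ≠ 1 := fun hre => hz1 <| by
    have him : z.im = 0 := abs_re_eq_norm.1 <|
      (abs_re_le_norm z).antisymm (by simpa [hre] using hz)
    exact Complex.ext hre him
  simpa using lt_of_le_of_ne ((re_le_norm z).trans hz) hre

open Complex in
/-- The bound inside the disc passes to the boundary along the radius through `z`. -/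
lemma norm_one_sub_mul_log_tail_le {z : ℂ} (hz : ‖z‖ ≤ 1) (N : ℕ) :
    ‖(1 - z) * (-log (1 - z) - ∑ i ∈ Finset.range N, z ^ (i + 1) / (i + 1))‖ ≤ 2 / (N + 1) := by
  rcases eq_or_ne z 1 with rfl | hz1
  · simpa using by positivity
  let tail : ℝ → ℂ := fun r =>
    (1 - r * z) * (-log (1 - r * z) - ∑ i ∈ Finset.range N, (r * z) ^ (i + 1) / (i + 1))
  have hcont : ContinuousAt tail 1 := by
    have hlog : ContinuousAt (fun r : ℝ => log (1 - r * z)) 1 :=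
      ContinuousAt.clog (by fun_prop)
        (by simpa using one_sub_mem_slitPlane_of_norm_le_one hz hz1)
    unfold tail
    fun_prop
  have hlim : Filter.Tendsto (fun r => ‖tail r‖) (nhdsWithin 1 (Set.Iio 1)) (nhds ‖tail 1‖) :=
    hcont.norm.mono_left nhdsWithin_le_nhds
  simp only [tail, ofReal_one, one_mul] at hlim
  refine le_of_tendsto hlim ?_
  filter_upwards [Ioo_mem_nhdsLT zero_lt_one] with r hr
  refine norm_one_sub_mul_log_tail_le_of_norm_lt_one ?_ N
  rw [norm_mul, Complex.norm_of_nonneg hr.1.le]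
  exact (mul_le_of_le_one_right hr.1.le hz).trans_lt hr.2

end LogTail

section Sawtooth

/-- The `2π`-periodic sawtooth wave `∑ sin (j * x) / j` over `j ≥ 1`, equal to `(π - x) / 2` on
`(0, 2π)` and to `0` at `0`. It is encoded as the imaginary part of the value
`-log (1 - exp (x * I))` of the power series `∑ z ^ j / j`. -/
noncomputable def sawtooth (x : ℝ) : ℝ :=
  (-Complex.log (1 - Complex.exp (x * Complex.I))).im

/-- The `N`-th partial sum of the Fourier series of `sawtooth`. -/
noncomputable def sawtoothSum (N : ℕ) (x : ℝ) : ℝ :=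
  ∑ i ∈ Finset.range N, Real.sin ((i + 1) * x) / (i + 1)

open Complex in
lemma one_sub_exp_mul_I (x : ℝ) :
    1 - exp (x * I) = (2 * Real.sin (x / 2) : ℝ) * exp (((x - π) / 2 : ℝ) * I) := by
  have hshift : exp (((x - π) / 2 : ℝ) * I) = -I * exp (x / 2 * I) := by
    rw [← exp_neg_pi_div_two_mul_I, ← Complex.exp_add]
    push_cast
    ring_nf
  have hsquare : exp (x * I) = exp (x / 2 * I) * exp (x / 2 * I) := by
    rw [← Complex.exp_add]
    ring_nf
  have hinv : exp (-(x / 2) * I) * exp (x / 2 * I) = 1 := by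
    rw [← Complex.exp_add]
    simp
  rw [hshift, hsquare]
  push_cast
  rw [two_sin]
  linear_combination -hinv + (exp (-(x / 2) * I) - exp (x / 2 * I)) * exp (x / 2 * I) * I_sq

lemma sawtooth_periodic : Function.Periodic sawtooth (2 * π) := fun x => by
  unfold sawtooth
  exact_mod_cast congrArg (fun z => (-Complex.log (1 - z)).im) (Complex.exp_mul_I_periodic x)

@[simp]
lemma sawtooth_zero : sawtooth 0 = 0 := by simp [sawtooth]

lemma sawtooth_of_mem_Ioo {x : ℝ} (hx : x ∈ Set.Ioo 0 (2 * π)) : sawtooth x = (π - x) / 2 := by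
  have hsin : 0 < Real.sin (x / 2) :=
    Real.sin_pos_of_pos_of_lt_pi (by linarith [hx.1]) (by linarith [hx.2])
  rw [sawtooth, one_sub_exp_mul_I, Complex.neg_im, Complex.log_im,
    Complex.arg_real_mul _ (by positivity), Complex.arg_exp_mul_I, toIocMod_eq_self _ |>.2]
  · ring
  · constructor <;> linarith [hx.1, hx.2]

lemma sawtooth_of_mem_Ioo_neg {x : ℝ} (hx : x ∈ Set.Ioo (-(2 * π)) 0) :
    sawtooth x = -(π + x) / 2 := by
  rw [← sawtooth_periodic, sawtooth_of_mem_Ioo ⟨by linarith [hx.1], by linarith [hx.2]⟩]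
  ring

lemma norm_one_sub_exp_mul_I (x : ℝ) :
    ‖1 - Complex.exp (x * Complex.I)‖ = 2 * |Real.sin (x / 2)| := by
  rw [norm_sub_rev, mul_comm, Complex.norm_exp_I_mul_ofReal_sub_one, Real.norm_eq_abs, abs_mul,
    abs_two]

lemma sawtooth_sub_sawtoothSum (x : ℝ) (N : ℕ) :
    sawtooth x - sawtoothSum N x =
      (-Complex.log (1 - Complex.exp (x * Complex.I))
        - ∑ i ∈ Finset.range N, Complex.exp (x * Complex.I) ^ (i + 1) / (i + 1)).im := by
  rw [Complex.sub_im, Complex.im_sum, sawtooth, sawtoothSum]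
  congr 1
  refine Finset.sum_congr rfl fun i _ => ?_
  have hangle : ((i + 1 : ℕ) : ℂ) * (x * Complex.I) = ((i + 1) * x : ℝ) * Complex.I := by
    push_cast
    ring
  rw [← Complex.exp_nat_mul, hangle, ← Nat.cast_succ, ← Nat.cast_succ, Complex.div_natCast_im,
    Complex.exp_ofReal_mul_I_im]

/-- At the jumps the right side is `0` because `1 / 0 = 0`, and so is the left side: there
`sawtooth` and all the partial sums vanish. -/
lemma abs_sawtooth_sub_sawtoothSum_le (x : ℝ) (N : ℕ) :
    |sawtooth x - sawtoothSum N x| ≤ 1 / |Real.sin (x / 2)| / (N + 1) := by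
  rw [sawtooth_sub_sawtoothSum]
  rcases eq_or_ne (Real.sin (x / 2)) 0 with hsin | hsin
  · have hexp : Complex.exp (x * Complex.I) = 1 := by
      have hnorm := norm_one_sub_exp_mul_I x
      rw [hsin, abs_zero, mul_zero, norm_eq_zero, sub_eq_zero] at hnorm
      exact hnorm.symm
    simp [hexp, hsin]
  · have htail := norm_one_sub_mul_log_tail_le (Complex.norm_exp_ofReal_mul_I x).le N
    rw [norm_mul, norm_one_sub_exp_mul_I, le_div_iff₀ (by positivity)] at htail
    refine (Complex.abs_im_le_norm _).trans ?_
    rw [div_div, le_div_iff₀ (by positivity)]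
    linarith

end Sawtooth

section FourierError

variable {α β θ : ℝ}

lemma add_sawtooth_sub_sawtooth (hα : α ∈ Set.Ioo 0 π) (hθ : θ ∈ Set.Icc 0 π) :
    α + (sawtooth (θ + α) - sawtooth (θ - α)) =
      if θ < α then π else if θ = α then π / 2 else 0 := by
  have hα0 := hα.1
  have hαπ := hα.2
  have hθ0 := hθ.1
  have hθπ := hθ.2
  rw [sawtooth_of_mem_Ioo (x := θ + α) ⟨by linarith, by linarith⟩]
  rcases lt_trichotomy θ α with h | rfl | h
  · rw [sawtooth_of_mem_Ioo_neg ⟨by linarith, by linarith⟩, if_pos h]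
    ring
  · rw [sub_self, sawtooth_zero, if_neg (lt_irrefl θ), if_pos rfl]
    ring
  · rw [sawtooth_of_mem_Ioo (x := θ - α) ⟨by linarith, by linarith⟩, if_neg h.not_gt,
      if_neg h.ne']
    ring

lemma stepS_cos (hβ : 0 < β) (hβα : β < α) (hα : α < π) (hθ : θ ∈ Set.Icc 0 π) :
    stepS (cos α) (cos β) (cos θ) =
      1 / π * ((α + (sawtooth (θ + α) - sawtooth (θ - α)))
        - (β + (sawtooth (θ + β) - sawtooth (θ - β)))) := by
  have hα_mem : α ∈ Set.Icc 0 π := ⟨(hβ.trans hβα).le, hα.le⟩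
  have hβ_mem : β ∈ Set.Icc 0 π := ⟨hβ.le, (hβα.trans hα).le⟩
  rw [add_sawtooth_sub_sawtooth ⟨hβ.trans hβα, hα⟩ hθ,
    add_sawtooth_sub_sawtooth ⟨hβ, hβα.trans hα⟩ hθ]
  simp only [stepS, Set.mem_Ioo, injOn_cos.eq_iff hθ hα_mem, injOn_cos.eq_iff hθ hβ_mem,
    strictAntiOn_cos.lt_iff_gt hα_mem hθ, strictAntiOn_cos.lt_iff_gt hθ hβ_mem]
  split_ifs <;> grind

lemma sawtoothSum_add_sub_sawtoothSum_sub (N : ℕ) (θ γ : ℝ) :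
    sawtoothSum N (θ + γ) - sawtoothSum N (θ - γ) =
      ∑ i ∈ Finset.range N, 2 * sin ((i + 1) * γ) * cos ((i + 1) * θ) / (i + 1) := by
  rw [sawtoothSum, sawtoothSum, ← Finset.sum_sub_distrib]
  refine Finset.sum_congr rfl fun i _ => ?_
  rw [mul_add, mul_sub, sin_add, sin_sub]
  ring

lemma sum_fourierC_mul_cos (α β θ : ℝ) (N : ℕ) :
    ∑ j ∈ Finset.range (N + 1), fourierC α β j * cos (j * θ) =
      1 / π * ((α + (sawtoothSum N (θ + α) - sawtoothSum N (θ - α)))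
        - (β + (sawtoothSum N (θ + β) - sawtoothSum N (θ - β)))) := by
  rw [sawtoothSum_add_sub_sawtoothSum_sub, sawtoothSum_add_sub_sawtoothSum_sub,
    Finset.sum_range_succ', add_sub_add_comm, ← Finset.sum_sub_distrib, mul_add, Finset.mul_sum,
    add_comm]
  simp only [fourierC, Nat.cast_zero, zero_mul, cos_zero, mul_one, Nat.cast_succ]
  congr 1
  · ring
  · refine Finset.sum_congr rfl fun i _ => ?_
    ring

/-- With the convention `1 / 0 = 0` the generic formula covers the two exceptional angles. -/
lemma Jfun_eq (α β θ : ℝ) :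
    Jfun α β θ = 1 / |sin ((θ + α) / 2)| + 1 / |sin ((θ - α) / 2)|
      + 1 / |sin ((θ + β) / 2)| + 1 / |sin ((θ - β) / 2)| := by
  unfold Jfun
  split_ifs with hα hβ
  · subst hα
    simp
  · subst hβ
    rw [← neg_sub α θ, neg_div, sin_neg, abs_neg, add_comm θ α]
    simp only [one_div, add_self_div_two, sub_self, zero_div, sin_zero, abs_zero, div_zero,
      add_zero]
    ring
  · rfl

lemma Jfun_nonneg (α β θ : ℝ) : 0 ≤ Jfun α β θ := by
  rw [Jfun_eq]
  positivity

lemma abs_stepS_cos_sub_sum_fourierC_le (hβ : 0 < β) (hβα : β < α) (hα : α < π)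
    (hθ : θ ∈ Set.Icc 0 π) (N : ℕ) :
    |stepS (cos α) (cos β) (cos θ) - ∑ j ∈ Finset.range (N + 1), fourierC α β j * cos (j * θ)|
      ≤ Jfun α β θ / (π * (N + 1)) := by
  let err : ℝ → ℝ := fun x => sawtooth x - sawtoothSum N x
  have habs (x : ℝ) : |err x| ≤ 1 / |sin (x / 2)| / (N + 1) := abs_sawtooth_sub_sawtoothSum_le x N
  rw [stepS_cos hβ hβα hα hθ, sum_fourierC_mul_cos, Jfun_eq]
  calc _ = 1 / π * |(err (θ + α) - err (θ - α)) - (err (θ + β) - err (θ - β))| := by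
        rw [← mul_sub, abs_mul, abs_of_pos (one_div_pos.2 pi_pos)]
        congr 2
        simp only [err]
        ring
    _ ≤ 1 / π * ((|err (θ + α)| + |err (θ - α)|) + (|err (θ + β)| + |err (θ - β)|)) := by
        gcongr
        exact (abs_sub _ _).trans (add_le_add (abs_sub _ _) (abs_sub _ _))
    _ ≤ 1 / π * (1 / |sin ((θ + α) / 2)| / (N + 1) + 1 / |sin ((θ - α) / 2)| / (N + 1)
          + (1 / |sin ((θ + β) / 2)| / (N + 1) + 1 / |sin ((θ - β) / 2)| / (N + 1))) := by
        gcongr <;> exact habs _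
    _ = _ := by
        field_simp
        ring

end FourierError

section Sinc

lemma mul_cos_le_sin {u : ℝ} (hu : u ∈ Set.Icc 0 π) : u * cos u ≤ sin u := by
  rcases lt_or_ge u (π / 2) with h | h
  · have hcos : 0 < cos u := cos_pos_of_mem_Ioo ⟨by linarith [pi_pos, hu.1], h⟩
    rw [← le_div_iff₀ hcos, ← tan_eq_sin_div_cos]
    exact le_tan hu.1 h
  · have hcos : cos u ≤ 0 := cos_nonpos_of_pi_div_two_le_of_le h (by linarith [pi_pos, hu.2])
    exact (mul_nonpos_of_nonneg_of_nonpos hu.1 hcos).trans (sin_nonneg_of_mem_Icc hu)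

lemma sin_sub_mul_cos_le_pow_three {u : ℝ} (hu : 0 ≤ u) : sin u - u * cos u ≤ u ^ 3 := by
  have hcos := mul_le_mul_of_nonneg_left (one_sub_sq_div_two_le_cos (x := u)) hu
  linarith [sin_le hu, pow_nonneg hu 3]

lemma sinc_pos {u : ℝ} (hu : u ∈ Set.Ico 0 π) : 0 < sinc u := by
  rcases hu.1.eq_or_lt with rfl | h
  · simp
  · rw [sinc_of_ne_zero h.ne']
    exact div_pos (sin_pos_of_pos_of_lt_pi h hu.2) h

lemma sinc_nonneg {u : ℝ} (hu : u ∈ Set.Icc 0 π) : 0 ≤ sinc u := by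
  rcases hu.2.eq_or_lt with rfl | h
  · simp [sinc_of_ne_zero pi_ne_zero]
  · exact (sinc_pos ⟨hu.1, h⟩).le

lemma hasDerivAt_sinc {u : ℝ} (hu : u ≠ 0) :
    HasDerivAt sinc ((u * cos u - sin u) / u ^ 2) u := by
  have hquot := (hasDerivAt_sin u).div (hasDerivAt_id' u) hu
  rw [mul_one, mul_comm] at hquot
  refine hquot.congr_of_eventuallyEq ?_
  filter_upwards [isOpen_ne.mem_nhds hu] with x hx
  simp [sinc_of_ne_zero hx]

lemma antitoneOn_sinc : AntitoneOn sinc (Set.Icc 0 π) := by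
  have hderiv (u : ℝ) (hu : u ∈ interior (Set.Icc 0 π)) :
      HasDerivAt sinc ((u * cos u - sin u) / u ^ 2) u := by
    rw [interior_Icc] at hu
    exact hasDerivAt_sinc hu.1.ne'
  refine antitoneOn_of_deriv_nonpos (convex_Icc 0 π) continuous_sinc.continuousOn
    (fun u hu => (hderiv u hu).differentiableAt.differentiableWithinAt) fun u hu => ?_
  rw [(hderiv u hu).deriv]
  exact div_nonpos_of_nonpos_of_nonneg (sub_nonpos.2 (mul_cos_le_sin (interior_subset hu)))
    (sq_nonneg u)

end Sinc

section LanczosDamping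

/-- The integrand of the constant `C_m`. Up to the factor `m * u` it is the derivative of
`-sinc u ^ m`, see `hasDerivAt_neg_sinc_rpow`. -/
noncomputable def lanczosIntegrand (m u : ℝ) : ℝ :=
  sin u ^ (m - 1) * (sin u - u * cos u) / u ^ (m + 2)

variable {m : ℝ}

lemma lanczosIntegrand_nonneg {u : ℝ} (hu : u ∈ Set.Icc 0 π) : 0 ≤ lanczosIntegrand m u := by
  have hsin := sin_nonneg_of_mem_Icc hu
  have hsub := sub_nonneg.2 (mul_cos_le_sin hu)
  have hu0 := hu.1
  unfold lanczosIntegrand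
  positivity

lemma lanczosIntegrand_eq_sinc_rpow_mul {u : ℝ} (hu : u ∈ Set.Ioo 0 π) :
    lanczosIntegrand m u = sinc u ^ (m - 1) * ((sin u - u * cos u) / u ^ 3) := by
  have hu0 : 0 < u := hu.1
  have hpow : u ^ (m + 2) = u ^ (m - 1) * u ^ 3 := by
    rw [← rpow_add_natCast hu0.ne']
    congr 1
    push_cast
    ring
  rw [lanczosIntegrand, sinc_of_ne_zero hu0.ne', div_rpow (sin_pos_of_mem_Ioo hu).le hu0.le, hpow,
    div_mul_div_comm]

lemma measurable_lanczosIntegrand (m : ℝ) : Measurable (lanczosIntegrand m) := by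
  unfold lanczosIntegrand
  fun_prop

lemma continuous_neg_sinc_rpow (hm : 0 ≤ m) : Continuous fun u => -sinc u ^ m :=
  (continuous_sinc.rpow_const fun _ => Or.inr hm).neg

lemma hasDerivAt_neg_sinc_rpow (m : ℝ) {u : ℝ} (hu : u ∈ Set.Ioo 0 π) :
    HasDerivAt (fun u => -sinc u ^ m) (m * (u * lanczosIntegrand m u)) u := by
  have hu0 : u ≠ 0 := hu.1.ne'
  have hpow := ((hasDerivAt_sinc hu0).rpow_const (p := m) (Or.inl
    (sinc_pos ⟨hu.1.le, hu.2⟩).ne')).neg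
  convert! hpow using 1
  rw [lanczosIntegrand_eq_sinc_rpow_mul hu]
  field_simp
  ring

lemma integrableOn_mul_lanczosIntegrand (hm : 0 ≤ m) :
    IntegrableOn (fun u => m * (u * lanczosIntegrand m u)) (Set.Ioc 0 π) :=
  intervalIntegral.integrableOn_deriv_of_nonneg (continuous_neg_sinc_rpow hm).continuousOn
    (fun _ hu => hasDerivAt_neg_sinc_rpow m hu)
    fun _ hu => mul_nonneg hm (mul_nonneg hu.1.le (lanczosIntegrand_nonneg ⟨hu.1.le, hu.2.le⟩))

lemma integrableOn_lanczosIntegrand_Ioc_zero_one (m : ℝ) :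
    IntegrableOn (lanczosIntegrand m) (Set.Ioc 0 1) := by
  have hone : (1 : ℝ) < π := by linarith [pi_gt_three]
  have hsinc : IntegrableOn (fun u => sinc u ^ (m - 1)) (Set.Icc 0 1) :=
    (continuous_sinc.continuousOn.rpow_const fun u hu =>
      Or.inl (sinc_pos ⟨hu.1, hu.2.trans_lt hone⟩).ne').integrableOn_Icc
  refine (hsinc.mono_set Set.Ioc_subset_Icc_self).mono'
    (measurable_lanczosIntegrand m).aestronglyMeasurable ?_
  filter_upwards [ae_restrict_mem measurableSet_Ioc] with u hu
  have huπ : u < π := hu.2.trans_lt hone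
  rw [norm_of_nonneg (lanczosIntegrand_nonneg ⟨hu.1.le, huπ.le⟩),
    lanczosIntegrand_eq_sinc_rpow_mul ⟨hu.1, huπ⟩]
  refine mul_le_of_le_one_right (rpow_nonneg (sinc_pos ⟨hu.1.le, huπ⟩).le _) ?_
  exact div_le_one_of_le₀ (sin_sub_mul_cos_le_pow_three hu.1.le) (pow_nonneg hu.1.le 3)

lemma integrableOn_lanczosIntegrand_Ioc_one_pi (hm : 0 < m) :
    IntegrableOn (lanczosIntegrand m) (Set.Ioc 1 π) := by
  have hderiv : IntegrableOn (fun u => m⁻¹ * (m * (u * lanczosIntegrand m u))) (Set.Ioc 1 π) :=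
    ((integrableOn_mul_lanczosIntegrand hm.le).mono_set
      (Set.Ioc_subset_Ioc_left zero_le_one)).const_mul _
  refine hderiv.mono' (measurable_lanczosIntegrand m).aestronglyMeasurable ?_
  filter_upwards [ae_restrict_mem measurableSet_Ioc] with u hu
  have hnonneg := lanczosIntegrand_nonneg (m := m) ⟨zero_le_one.trans hu.1.le, hu.2⟩
  rw [norm_of_nonneg hnonneg, inv_mul_cancel_left₀ hm.ne']
  exact le_mul_of_one_le_left hnonneg hu.1.le

lemma integrableOn_lanczosIntegrand (hm : 0 < m) :
    IntegrableOn (lanczosIntegrand m) (Set.Ioc 0 π) := by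
  rw [← Set.Ioc_union_Ioc_eq_Ioc zero_le_one (by linarith [pi_gt_three])]
  exact (integrableOn_lanczosIntegrand_Ioc_zero_one m).union
    (integrableOn_lanczosIntegrand_Ioc_one_pi hm)

lemma lanczosCm_nonneg (m : ℝ) : 0 ≤ lanczosCm m :=
  setIntegral_nonneg measurableSet_Ioo fun _ hu =>
    lanczosIntegrand_nonneg (Set.Ioo_subset_Icc_self hu)

lemma intervalIntegrable_lanczosIntegrand (hm : 0 < m) {p q : ℝ} (hp : 0 ≤ p) (hpq : p ≤ q)
    (hq : q ≤ π) : IntervalIntegrable (lanczosIntegrand m) volume p q := by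
  rw [intervalIntegrable_iff_integrableOn_Ioc_of_le hpq]
  exact (integrableOn_lanczosIntegrand hm).mono_set (Set.Ioc_subset_Ioc hp hq)

lemma sinc_rpow_sub_sinc_rpow_le (hm : 0 < m) {p q : ℝ} (hp : 0 ≤ p) (hpq : p ≤ q) (hq : q ≤ π) :
    sinc p ^ m - sinc q ^ m ≤ m * q * ∫ u in p..q, lanczosIntegrand m u := by
  have hsub : Set.Ioo p q ⊆ Set.Ioo 0 π := Set.Ioo_subset_Ioo hp hq
  have hderiv : IntervalIntegrable (fun u => m * (u * lanczosIntegrand m u)) volume p q := by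
    rw [intervalIntegrable_iff_integrableOn_Ioc_of_le hpq]
    exact (integrableOn_mul_lanczosIntegrand hm.le).mono_set (Set.Ioc_subset_Ioc hp hq)
  calc sinc p ^ m - sinc q ^ m = ∫ u in p..q, m * (u * lanczosIntegrand m u) := by
        rw [intervalIntegral.integral_eq_sub_of_hasDerivAt_of_le hpq
          (continuous_neg_sinc_rpow hm.le).continuousOn
          (fun u hu => hasDerivAt_neg_sinc_rpow m (hsub hu)) hderiv, neg_sub_neg]
    _ ≤ ∫ u in p..q, m * q * lanczosIntegrand m u := by
        refine intervalIntegral.integral_mono_on_of_le_Ioo hpq hderiv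
          ((intervalIntegrable_lanczosIntegrand hm hp hpq hq).const_mul _) fun u hu => ?_
        have hnonneg := lanczosIntegrand_nonneg (m := m) (Set.Ioo_subset_Icc_self (hsub hu))
        rw [mul_assoc]
        gcongr
        exact hu.2.le
    _ = m * q * ∫ u in p..q, lanczosIntegrand m u := intervalIntegral.integral_const_mul _ _

lemma intervalIntegral_lanczosIntegrand_le_lanczosCm (hm : 0 < m) {q : ℝ} (hq0 : 0 ≤ q)
    (hq : q ≤ π) : ∫ u in 0..q, lanczosIntegrand m u ≤ lanczosCm m := by
  change _ ≤ ∫ u in Set.Ioo 0 π, lanczosIntegrand m u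
  rw [← integral_Ioc_eq_integral_Ioo, intervalIntegral.integral_of_le hq0]
  refine setIntegral_mono_set (integrableOn_lanczosIntegrand hm) ?_
    (Set.Ioc_subset_Ioc_right hq).eventuallyLE
  filter_upwards [ae_restrict_mem measurableSet_Ioc] with u hu
  exact lanczosIntegrand_nonneg (Set.Ioc_subset_Icc_self hu)

/-- The angle `j π / (k + 1)` at which `sinc ^ m` takes the value `d^m_{j,k}`. -/
noncomputable def dampNode (k j : ℕ) : ℝ := j * (π / (k + 1))

lemma dampL_eq_sinc_rpow (m : ℝ) (k j : ℕ) : dampL m k j = sinc (dampNode k j) ^ m := by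
  rcases eq_or_ne j 0 with rfl | hj
  · simp [dampL, dampNode]
  · have hnode : dampNode k j ≠ 0 := by
      unfold dampNode
      positivity
    rw [sinc_of_ne_zero hnode, dampNode, dampL, if_neg hj, mul_div_assoc]

lemma monotone_dampNode (k : ℕ) : Monotone (dampNode k) := fun i j hij => by
  unfold dampNode
  gcongr

lemma dampNode_mem_Icc {k j : ℕ} (hj : j ≤ k + 1) : dampNode k j ∈ Set.Icc 0 π := by
  have hlast : dampNode k (k + 1) = π := by
    rw [dampNode, Nat.cast_succ]
    field_simp
  refine ⟨?_, hlast ▸ monotone_dampNode k hj⟩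
  unfold dampNode
  positivity

lemma dampL_nonneg (m : ℝ) {k j : ℕ} (hj : j ≤ k + 1) : 0 ≤ dampL m k j := by
  rw [dampL_eq_sinc_rpow]
  exact rpow_nonneg (sinc_nonneg (dampNode_mem_Icc hj)) m

lemma dampL_succ_le (hm : 0 ≤ m) {k j : ℕ} (hj : j ≤ k) : dampL m k (j + 1) ≤ dampL m k j := by
  have hj1 := dampNode_mem_Icc (Nat.succ_le_succ hj)
  rw [dampL_eq_sinc_rpow, dampL_eq_sinc_rpow]
  exact rpow_le_rpow (sinc_nonneg hj1)
    (antitoneOn_sinc (dampNode_mem_Icc (Nat.le_succ_of_le hj)) hj1 (monotone_dampNode k j.le_succ))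
    hm

lemma dampL_sub_dampL_succ_div_le (hm : 0 < m) {k j : ℕ} (hj : j ≤ k) :
    (dampL m k j - dampL m k (j + 1)) / (π * (j + 1)) ≤
      m / (k + 1) * ∫ u in dampNode k j..dampNode k (j + 1), lanczosIntegrand m u := by
  have hj0 := (dampNode_mem_Icc (Nat.le_succ_of_le hj)).1
  have hj1 := (dampNode_mem_Icc (Nat.succ_le_succ hj)).2
  rw [dampL_eq_sinc_rpow, dampL_eq_sinc_rpow, div_le_iff₀ (by positivity)]
  refine (sinc_rpow_sub_sinc_rpow_le hm hj0 (monotone_dampNode k j.le_succ) hj1).trans_eq ?_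
  have hnode : dampNode k (j + 1) = (j + 1) * (π / (k + 1)) := by
    rw [dampNode, Nat.cast_succ]
  rw [show m * dampNode k (j + 1) = m / (k + 1) * (π * (j + 1)) by rw [hnode]; ring]
  ring

lemma sum_dampL_sub_dampL_succ_div_le (hm : 0 < m) {k K : ℕ} (hK : K ≤ k + 1) :
    ∑ j ∈ Finset.range K, (dampL m k j - dampL m k (j + 1)) / (π * (j + 1)) ≤
      m * lanczosCm m / (k + 1) := by
  have hnode := dampNode_mem_Icc hK
  calc _ ≤ ∑ j ∈ Finset.range K,
          m / (k + 1) * ∫ u in dampNode k j..dampNode k (j + 1), lanczosIntegrand m u :=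
        Finset.sum_le_sum fun j hj =>
          dampL_sub_dampL_succ_div_le hm (by have := Finset.mem_range.1 hj; omega)
    _ = m / (k + 1) * ∫ u in 0..dampNode k K, lanczosIntegrand m u := by
        rw [← Finset.mul_sum, intervalIntegral.sum_integral_adjacent_intervals fun j hj => ?_]
        · simp [dampNode]
        · exact intervalIntegrable_lanczosIntegrand hm (dampNode_mem_Icc (by omega)).1
            (monotone_dampNode k j.le_succ) (dampNode_mem_Icc (by omega)).2
    _ ≤ m / (k + 1) * lanczosCm m := by
        gcongr
        exact intervalIntegral_lanczosIntegrand_le_lanczosCm hm hnode.1 hnode.2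
    _ = m * lanczosCm m / (k + 1) := by ring

end LanczosDamping

section ScalarError

lemma abs_stepS_cos_sub_sum_fourierC_mul_dampL_le {α β θ m : ℝ} (hβ : 0 < β) (hβα : β < α)
    (hα : α < π) (hθ : θ ∈ Set.Icc 0 π) (hm : 0 < m) {k K : ℕ} (hK : K ≤ k + 1) :
    |stepS (cos α) (cos β) (cos θ)
        - ∑ j ∈ Finset.range (K + 1), fourierC α β j * dampL m k j * cos (j * θ)|
      ≤ dampL m k K * Jfun α β θ / (π * (K + 1)) + m * lanczosCm m * Jfun α β θ / (k + 1) := by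
  have hparts := norm_smul_sub_sum_smul_le (d := dampL m k)
    (B := fun j => Jfun α β θ / (π * (j + 1))) (e := fun j => fourierC α β j * cos (j * θ))
    (s := stepS (cos α) (cos β) (cos θ)) (fun j hj => dampL_succ_le hm.le (by omega))
    (dampL_nonneg m hK) fun j _ => abs_stepS_cos_sub_sum_fourierC_le hβ hβα hα hθ j
  have hd0 : dampL m k 0 = 1 := if_pos rfl
  simp only [smul_eq_mul, hd0, one_mul, norm_eq_abs] at hparts
  calc _ = |stepS (cos α) (cos β) (cos θ)
          - ∑ j ∈ Finset.range (K + 1), dampL m k j * (fourierC α β j * cos (j * θ))| := by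
        simp only [mul_left_comm (dampL m k _), mul_assoc]
    _ ≤ _ := hparts
    _ = dampL m k K * Jfun α β θ / (π * (K + 1)) +
          (∑ j ∈ Finset.range K, (dampL m k j - dampL m k (j + 1)) / (π * (j + 1)))
            * Jfun α β θ := by
        rw [add_comm, Finset.sum_mul, mul_div_assoc]
        congr 1
        exact Finset.sum_congr rfl fun j _ => by ring
    _ ≤ _ := by
        rw [mul_div_right_comm (m * lanczosCm m)]
        gcongr
        · exact Jfun_nonneg α β θ
        · exact sum_dampL_sub_dampL_succ_div_le hm hK

end ScalarError

section UnitaryConjugation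

variable {𝕜 ι : Type*} [RCLike 𝕜] [Fintype ι] [DecidableEq ι] {U : Matrix ι ι 𝕜}

open scoped Matrix.Norms.L2Operator in
lemma norm_toEuclideanCLM_conj_diagonal_le (hU : U ∈ unitaryGroup ι 𝕜) {v : ι → 𝕜} {B : ℝ}
    (hB : 0 ≤ B) (hv : ∀ i, ‖v i‖ ≤ B) :
    ‖toEuclideanCLM (𝕜 := 𝕜) (U * diagonal v * Uᴴ)‖ ≤ B := by
  change ‖U * diagonal v * star U‖ ≤ B
  rw [CStarRing.norm_mul_mem_unitary _ (Unitary.star_mem hU), CStarRing.norm_mem_unitary_mul _ hU,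
    l2_opNorm_diagonal]
  exact (pi_norm_le_iff_of_nonneg hB).2 hv

lemma aeval_conj_diagonal (hU : U ∈ unitaryGroup ι 𝕜) (v : ι → 𝕜) (p : 𝕜[X]) :
    aeval (U * diagonal v * Uᴴ) p = U * diagonal (fun i => p.eval (v i)) * Uᴴ := by
  let conj := Unitary.conjStarAlgAut 𝕜 (Matrix ι ι 𝕜) ⟨U, hU⟩
  change aeval (conj (diagonalAlgHom 𝕜 v)) p = conj (diagonalAlgHom 𝕜 fun i => p.eval (v i))
  rw [aeval_algHom_apply, aeval_algHom_apply]
  congr 2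
  ext i
  simp

lemma norm_conj_diagonal_sub_aeval_le (hU : U ∈ unitaryGroup ι 𝕜) (v w : ι → 𝕜) (p : 𝕜[X])
    {B : ℝ} (hB : 0 ≤ B) (hp : ∀ i, ‖w i - p.eval (v i)‖ ≤ B) :
    ‖toEuclideanCLM (𝕜 := 𝕜) (U * diagonal w * Uᴴ - aeval (U * diagonal v * Uᴴ) p)‖ ≤ B := by
  rw [aeval_conj_diagonal hU, ← sub_mul, ← mul_sub, diagonal_sub]
  exact norm_toEuclideanCLM_conj_diagonal_le hU hB hp

end UnitaryConjugation

section ChebyshevFilter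

/-- The filter `ρ` as a polynomial, so that `ρ(A)` is `aeval A` of it. -/
noncomputable def chebFilterPoly (a b m : ℝ) (k k' : ℕ) : ℂ[X] :=
  ∑ j ∈ Finset.range (k' + 1),
    ((fourierC (arccos a) (arccos b) j * dampL m k j : ℝ) : ℂ) • Chebyshev.T ℂ (j : ℤ)

lemma chebFilter_eq_aeval (a b m : ℝ) (k k' : ℕ) {n : ℕ} (A : Matrix (Fin n) (Fin n) ℂ) :
    chebFilter a b m k k' A = aeval A (chebFilterPoly a b m k k') := by
  simp only [chebFilter, chebFilterPoly, map_sum, map_smul]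

lemma eval_chebFilterPoly (a b m : ℝ) (k k' : ℕ) {x : ℝ} (hx : x ∈ Set.Icc (-1) 1) :
    (chebFilterPoly a b m k k').eval (x : ℂ) =
      ((∑ j ∈ Finset.range (k' + 1), fourierC (arccos a) (arccos b) j * dampL m k j
        * cos (j * arccos x) : ℝ) : ℂ) := by
  have hT (j : ℕ) : (Chebyshev.T ℂ (j : ℤ)).eval (x : ℂ) = (cos (j * arccos x) : ℝ) := by
    have hcos := Chebyshev.T_complex_cos (arccos x : ℂ) j
    rw [← Complex.ofReal_cos, cos_arccos hx.1 hx.2] at hcos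
    rw [hcos]
    push_cast
    rfl
  simp only [chebFilterPoly, eval_finsetSum, eval_smul, smul_eq_mul, hT]
  push_cast
  rfl

lemma norm_stepS_sub_eval_chebFilterPoly_le {a b x m : ℝ} (ha : -1 < a) (hab : a < b) (hb : b < 1)
    (hx : x ∈ Set.Icc (-1) 1) (hm : 0 < m) {k k' : ℕ} (hk' : k' ≤ k + 1) :
    ‖((stepS a b x : ℝ) : ℂ) - (chebFilterPoly a b m k k').eval (x : ℂ)‖ ≤
      dampL m k k' * Jfun (arccos a) (arccos b) (arccos x) / (π * (k' + 1))
        + m * lanczosCm m * Jfun (arccos a) (arccos b) (arccos x) / (k + 1) := by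
  have ha1 : a < 1 := hab.trans hb
  have hb1 : -1 < b := ha.trans hab
  have hscalar := abs_stepS_cos_sub_sum_fourierC_mul_dampL_le (arccos_pos.2 hb)
    (strictAntiOn_arccos ⟨ha.le, ha1.le⟩ ⟨hb1.le, hb.le⟩ hab) (arccos_lt_pi.2 ha)
    ⟨arccos_nonneg x, arccos_le_pi x⟩ hm hk'
  rw [cos_arccos ha.le ha1.le, cos_arccos hb1.le hb.le, cos_arccos hx.1 hx.2] at hscalar
  rwa [eval_chebFilterPoly a b m k k' hx, ← Complex.ofReal_sub, Complex.norm_real, norm_eq_abs]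

/-- At `k' = k + 1` the damping factor vanishes and only the term in `C_m` remains. -/
theorem spectral_projector_error_bound_general (n : ℕ) (hn : 0 < n)
    (a b : ℝ) (ha : -1 < a) (hab : a < b) (hb : b < 1)
    (A U : Matrix (Fin n) (Fin n) ℂ) (hU : U ∈ Matrix.unitaryGroup (Fin n) ℂ)
    (lam : Fin n → ℝ) (hlam : ∀ i, lam i ∈ Set.Icc (-1 : ℝ) 1)
    (hA : A = U * Matrix.diagonal (fun i => (lam i : ℂ)) * Uᴴ)
    (m : ℝ) (hm : 0 < m) (k k' : ℕ) (hk' : k' ≤ k + 1) :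
    ‖Matrix.toEuclideanCLM (𝕜 := ℂ)
        (U * Matrix.diagonal (fun i => ((stepS a b (lam i) : ℝ) : ℂ)) * Uᴴ
          - chebFilter a b m k k' A)‖
      ≤ dampL m k k' * (⨆ i : Fin n, Jfun (Real.arccos a) (Real.arccos b)
            (Real.arccos (lam i))) / (Real.pi * (k' + 1))
        + m * lanczosCm m * (⨆ i : Fin n, Jfun (Real.arccos a) (Real.arccos b)
            (Real.arccos (lam i))) / (k + 1) := by
  let J : Fin n → ℝ := fun i => Jfun (arccos a) (arccos b) (arccos (lam i))
  have hJ (i : Fin n) : J i ≤ ⨆ i, J i := le_ciSup (Set.finite_range J).bddAbove i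
  have hJ0 : 0 ≤ ⨆ i, J i := (Jfun_nonneg _ _ _).trans (hJ ⟨0, hn⟩)
  have hd := dampL_nonneg m hk'
  have hC := lanczosCm_nonneg m
  rw [hA, chebFilter_eq_aeval]
  refine norm_conj_diagonal_sub_aeval_le hU _ _ _ (by positivity) fun i => ?_
  refine (norm_stepS_sub_eval_chebFilterPoly_le ha hab hb (hlam i) hm hk').trans ?_
  gcongr <;> exact hJ i

end ChebyshevFilter

/-- Spectral-norm bound for the approximate spectral projector: for a Hermitian matrix
`A = U diag(λ) U*` with spectrum in `[-1, 1]`,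
`‖P − ρ(A)‖₂ ≤ d^m_{k',k} J*/(π(k'+1)) + m C_m J*/(k+1) + mπ²/(3(k+1)²)`,
where `J* = max_j J(arccos λ_j)`. -/
theorem spectral_projector_error_bound (n : ℕ) (hn : 0 < n)
    (a b : ℝ) (ha : -1 < a) (hab : a < b) (hb : b < 1)
    (A U : Matrix (Fin n) (Fin n) ℂ) (hU : U ∈ Matrix.unitaryGroup (Fin n) ℂ)
    (lam : Fin n → ℝ) (hlam : ∀ i, lam i ∈ Set.Icc (-1 : ℝ) 1)
    (hA : A = U * Matrix.diagonal (fun i => (lam i : ℂ)) * Uᴴ)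
    (m : ℝ) (hm : 0 < m) (k k' : ℕ) (hk' : 1 ≤ k') (hk'k : k' ≤ k) :
    ‖Matrix.toEuclideanCLM (𝕜 := ℂ)
        (U * Matrix.diagonal (fun i => ((stepS a b (lam i) : ℝ) : ℂ)) * Uᴴ
          - chebFilter a b m k k' A)‖
      ≤ dampL m k k' * (⨆ i : Fin n, Jfun (Real.arccos a) (Real.arccos b)
            (Real.arccos (lam i))) / (Real.pi * (k' + 1))
        + m * lanczosCm m * (⨆ i : Fin n, Jfun (Real.arccos a) (Real.arccos b)
            (Real.arccos (lam i))) / (k + 1)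
        + m * Real.pi ^ 2 / (3 * (k + 1) ^ 2) := by
  refine (spectral_projector_error_bound_general n hn a b ha hab hb A U hU lam hlam hA m hm k k'
    (hk'k.trans k.le_succ)).trans (le_add_of_nonneg_right ?_)
  positivity
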